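/- arXiv:2207.02065 — 18 statements merged into one kernel-verified Lean document; each statement's English description precedes it below -/
import Mathlib

section
/- Let {J_i}_{i∈Δ} be a nonempty family of ideals of R, directed under inclusion, such that every J_i is a φ-δ-S-primary ideal of R associated to the same element s ∈ S. Then the union J = ⋃_{i∈Δ} J_i is a φ-δ-S-primary ideal of R associated to s. -/
/-!
A directed supremum of ideals is their union, so any membership in it is witnessed in a single `J i`.
Disjointness from `S` is then inherited, and properness follows since `1 ∈ S`. If `a * b` lies in the
union but not in its `φ`, then it lies in some `J i` and, `φ` being monotone, not in `φ (J i)`;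
primariness of `J i` at the common element `s` and monotonicity of `δ` conclude.
-/

/-- An expansion function of ideals: `I ⊆ δ I` and monotone. -/
def IsIdealExpansion {R : Type*} [CommRing R] (δ : Ideal R → Ideal R) : Prop :=
  (∀ I : Ideal R, I ≤ δ I) ∧ ∀ I J : Ideal R, J ≤ I → δ J ≤ δ I

/-- A reduction function of ideals: `φ I ⊆ I` and monotone. -/
def IsIdealReduction {R : Type*} [CommRing R] (φ : Ideal R → Ideal R) : Prop :=
  (∀ I : Ideal R, φ I ≤ I) ∧ ∀ P Q : Ideal R, P ≤ Q → φ P ≤ φ Q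

/-- A multiplicative subset of `R` containing `1`. -/
def IsMultSubset {R : Type*} [CommRing R] (S : Set R) : Prop :=
  (1 : R) ∈ S ∧ ∀ a ∈ S, ∀ b ∈ S, a * b ∈ S

/-- `I` is a `φ`-`δ`-`S`-primary ideal of `R` associated to `s ∈ S`:
`I` is proper, disjoint from `S`, and whenever `a * b ∈ I \ φ I`
then `s * a ∈ I` or `s * b ∈ δ I`. -/
def IsPhiDeltaSPrimary {R : Type*} [CommRing R] (φ δ : Ideal R → Ideal R)
    (S : Set R) (s : R) (I : Ideal R) : Prop :=
  I ≠ ⊤ ∧ (I : Set R) ∩ S = ∅ ∧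
    ∀ a b : R, a * b ∈ I → a * b ∉ φ I → s * a ∈ I ∨ s * b ∈ δ I

/-- `I` is a `δ`-`S`-primary ideal of `R` associated to `s ∈ S`. -/
def IsDeltaSPrimary {R : Type*} [CommRing R] (δ : Ideal R → Ideal R)
    (S : Set R) (s : R) (I : Ideal R) : Prop :=
  I ≠ ⊤ ∧ (I : Set R) ∩ S = ∅ ∧
    ∀ a b : R, a * b ∈ I → s * a ∈ I ∨ s * b ∈ δ I

/-- The colon ideal `(I : x) = {r : R | r * x ∈ I}`. -/
def eltColon {R : Type*} [CommRing R] (I : Ideal R) (x : R) : Ideal R :=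
  Submodule.colon I (Ideal.span {x})

theorem directed_union_phi_delta_S_primary
    {R : Type*} [CommRing R] [Nontrivial R]
    (δ φ : Ideal R → Ideal R)
    (hδ : IsIdealExpansion δ) (hφ : IsIdealReduction φ)
    (S : Set R) (hS : IsMultSubset S) (s : R) (hs : s ∈ S)
    {ι : Type*} [Nonempty ι] (J : ι → Ideal R)
    (hdir : ∀ i j : ι, ∃ k : ι, J i ≤ J k ∧ J j ≤ J k)
    (hprim : ∀ i : ι, IsPhiDeltaSPrimary φ δ S s (J i)) :
    IsPhiDeltaSPrimary φ δ S s (⨆ i, J i) := by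
  -- Directedness makes the supremum the set-theoretic union.
  have hmem : ∀ x : R, x ∈ ⨆ i, J i ↔ ∃ i, x ∈ J i := fun x =>
    Submodule.mem_iSup_of_directed J hdir
  have hdisj : ∀ x ∈ ⨆ i, J i, x ∉ S := by
    intro x hx hxS
    obtain ⟨i, hi⟩ := (hmem x).1 hx
    have h : x ∈ (J i : Set R) ∩ S := ⟨hi, hxS⟩
    rw [(hprim i).2.1] at h
    exact h
  refine ⟨fun htop => hdisj 1 (htop ▸ Submodule.mem_top) hS.1, ?_, ?_⟩
  · exact Set.eq_empty_of_forall_notMem fun x hx => hdisj x hx.1 hx.2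
  · intro a b hab hnot
    obtain ⟨i, hi⟩ := (hmem _).1 hab
    have hle : J i ≤ ⨆ i, J i := le_iSup J i
    exact ((hprim i).2.2 a b hi fun h => hnot (hφ.2 _ _ hle h)).imp
      (fun h => hle h) (fun h => hδ.2 _ _ hle h)
end

section
/- Let I be a proper ideal of R that is a φ-δ-S-primary ideal of R associated to s ∈ S, and suppose that √(δ(I)) ⊆ δ(√I) and √(φ(I)) ⊆ φ(√I). Then the radical √I is a φ-δ-S-primary ideal of R associated to s. -/
theorem radical_phi_delta_S_primary
    {R : Type*} [CommRing R] [Nontrivial R]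
    (δ φ : Ideal R → Ideal R)
    (hδ : IsIdealExpansion δ) (hφ : IsIdealReduction φ)
    (S : Set R) (hS : IsMultSubset S) (s : R) (hs : s ∈ S)
    (I : Ideal R) (hI : IsPhiDeltaSPrimary φ δ S s I)
    (hrad_δ : (δ I).radical ≤ δ I.radical)
    (hrad_φ : (φ I).radical ≤ φ I.radical) :
    IsPhiDeltaSPrimary φ δ S s I.radical := by
  obtain ⟨hne, hdisj, hprim⟩ := hI
  -- `(s * x) ^ (n + 1)` is a multiple of `s * x ^ n`; this also covers `n = 0`.
  have key : ∀ (J : Ideal R) (x : R) (n : ℕ), s * x ^ n ∈ J → s * x ∈ J.radical := by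
    intro J x n h
    refine ⟨n + 1, ?_⟩
    have heq : (s * x) ^ (n + 1) = (s ^ n * x) * (s * x ^ n) := by ring
    rw [heq]
    exact J.mul_mem_left _ h
  refine ⟨fun h => hne (Ideal.radical_eq_top.mp h), ?_, ?_⟩
  · rw [Set.eq_empty_iff_forall_notMem] at hdisj ⊢
    rintro x ⟨⟨n, hn⟩, hxS⟩
    have hpow : ∀ k : ℕ, x ^ k ∈ S := by
      intro k
      induction k with
      | zero => simpa using hS.1
      | succ k ih => rw [pow_succ]; exact hS.2 _ ih _ hxS
    exact hdisj (x ^ n) ⟨hn, hpow n⟩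
  · rintro a b ⟨n, hn⟩ hab
    have hnφ : (a * b) ^ n ∉ φ I := fun h => hab (hrad_φ ⟨n, h⟩)
    rw [mul_pow] at hn hnφ
    rcases hprim _ _ hn hnφ with h | h
    · exact Or.inl (key I a n h)
    · exact Or.inr (hrad_δ (key (δ I) b n h))
end

section
/- Let I be a proper ideal of R that is a φ-S-primary ideal of R associated to s ∈ S, and suppose that √(φ(I)) ⊆ φ(√I). Then √I is a φ-S-prime ideal of R associated to s, i.e., √I is a proper ideal with √I ∩ S = ∅ and whenever a, b ∈ R with ab ∈ √I \ φ(√I), then sa ∈ √I or sb ∈ √I. -/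
theorem radical_phi_S_prime
    {R : Type*} [CommRing R] [Nontrivial R]
    (φ : Ideal R → Ideal R) (hφ : IsIdealReduction φ)
    (S : Set R) (hS : IsMultSubset S) (s : R) (hs : s ∈ S)
    (I : Ideal R)
    (hI : IsPhiDeltaSPrimary φ (fun J => J.radical) S s I)
    (hrad_φ : (φ I).radical ≤ φ I.radical) :
    I.radical ≠ ⊤ ∧ (I.radical : Set R) ∩ S = ∅ ∧
      ∀ a b : R, a * b ∈ I.radical → a * b ∉ φ I.radical →
        s * a ∈ I.radical ∨ s * b ∈ I.radical := by
  obtain ⟨hne, hdisj, hprim⟩ := hI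
  refine ⟨fun h => hne (Ideal.radical_eq_top.mp h), ?_, ?_⟩
  · rw [Set.eq_empty_iff_forall_notMem]
    rintro x ⟨⟨n, hn⟩, hxS⟩
    have hpow : ∀ k : ℕ, x ^ k ∈ S := by
      intro k
      induction k with
      | zero => simpa using hS.1
      | succ k ih => rw [pow_succ]; exact hS.2 _ ih _ hxS
    exact Set.eq_empty_iff_forall_notMem.mp hdisj _ ⟨hn, hpow n⟩
  · rintro a b ⟨n, hn⟩ hnφ
    -- No power of `a * b` lies in `φ I`, since `√(φ I) ⊆ φ (√I)`.
    have hnot : (a * b) ^ n ∉ φ I := fun h => hnφ (hrad_φ ⟨n, h⟩)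
    rw [mul_pow] at hn hnot
    -- The exponent `n + 1` avoids separating the case `n = 0`.
    have key : ∀ c : R, (s * c) ^ (n + 1) = (s ^ n * c) * (s * c ^ n) := fun c => by ring
    rcases hprim _ _ hn hnot with h | h
    · exact Or.inl ⟨n + 1, key a ▸ I.mul_mem_left _ h⟩
    · exact Or.inr (I.radical_isRadical ⟨n + 1, key b ▸ I.radical.mul_mem_left _ h⟩)
end

section
/- Let I be a proper ideal of R that is a φ-S-primary ideal of R associated to s ∈ S. Suppose that √(φ(I)) ⊆ φ(√I) and that (φ(√I) : x) ⊆ (φ(√I) : s) for each x ∈ S. If a ∈ R with sa ∉ √I, then S ∩ (√I : a) = ∅, i.e., there is no t ∈ S with ta ∈ √I. -/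
theorem mem_eltColon_iff {R : Type*} [CommRing R] (J : Ideal R) (x r : R) :
    r ∈ eltColon J x ↔ r * x ∈ J := by
  simp [eltColon]

theorem disjoint_colon_radical
    {R : Type*} [CommRing R] [Nontrivial R]
    (φ : Ideal R → Ideal R) (hφ : IsIdealReduction φ)
    (S : Set R) (hS : IsMultSubset S) (s : R) (hs : s ∈ S)
    (I : Ideal R)
    (hI : IsPhiDeltaSPrimary φ (fun J => J.radical) S s I)
    (hrad_φ : (φ I).radical ≤ φ I.radical)
    (hcolon : ∀ x ∈ S, eltColon (φ I.radical) x ≤ eltColon (φ I.radical) s)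
    (a : R) (ha : s * a ∉ I.radical) :
    ∀ t ∈ S, t * a ∉ I.radical := by
  intro t ht hta
  obtain ⟨n, hn⟩ := hta
  rw [mul_pow] at hn
  by_cases hφn : t ^ n * a ^ n ∈ φ I
  · have h1 : t * a ∈ φ I.radical := hrad_φ ⟨n, by rwa [mul_pow]⟩
    have h2 : a ∈ eltColon (φ I.radical) s :=
      hcolon t ht ((mem_eltColon_iff _ _ _).2 (by rwa [mul_comm]))
    rw [mem_eltColon_iff, mul_comm] at h2
    exact ha (hφ.1 _ h2)
  · rcases hI.2.2 _ _ hn hφn with h | h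
    · have hpow : ∀ k : ℕ, s * t ^ k ∈ S := by
        intro k
        induction k with
        | zero => simpa using hs
        | succ k ih => rw [pow_succ, ← mul_assoc]; exact hS.2 _ ih _ ht
      exact Set.eq_empty_iff_forall_notMem.1 hI.2.1 _ ⟨h, hpow n⟩
    -- The exponent `n + 1` avoids a separate case `n = 0`:
    -- `(s * a) ^ (n + 1)` is always a multiple of `s * a ^ n`.
    · refine ha (I.radical_isRadical ⟨n + 1, ?_⟩)
      have e : (s * a) ^ (n + 1) = (s ^ n * a) * (s * a ^ n) := by ring
      rw [e]
      exact Ideal.mul_mem_left _ _ h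
end

section
/- Let I be a proper ideal of R that is a φ-δ-S-primary ideal of R associated to s ∈ S. If a ∈ R with s²a ∉ δ(I), then (I : sa) = (I : s) or (I : sa) = (φ(I) : sa). -/
theorem mem_eltColon {R : Type*} [CommRing R] {I : Ideal R} {x r : R} :
    r ∈ eltColon I x ↔ r * x ∈ I := by
  simp [eltColon, Submodule.colon_span]

theorem colon_sa_eq
    {R : Type*} [CommRing R] [Nontrivial R]
    (δ φ : Ideal R → Ideal R)
    (hδ : IsIdealExpansion δ) (hφ : IsIdealReduction φ)
    (S : Set R) (hS : IsMultSubset S) (s : R) (hs : s ∈ S)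
    (I : Ideal R) (hI : IsPhiDeltaSPrimary φ δ S s I)
    (a : R) (ha : s * s * a ∉ δ I) :
    eltColon I (s * a) = eltColon I s ∨
      eltColon I (s * a) = eltColon (φ I) (s * a) := by
  have hcover : (eltColon I (s * a) : Set R) ⊆ eltColon I s ∪ eltColon (φ I) (s * a) := by
    intro r hr
    have hr' : r * (s * a) ∈ I := mem_eltColon.1 hr
    by_cases hφr : r * (s * a) ∈ φ I
    · exact Or.inr (mem_eltColon.2 hφr)
    · rcases hI.2.2 r (s * a) hr' hφr with h | h
      · exact Or.inl (mem_eltColon.2 (by rwa [mul_comm]))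
      · exact absurd (by rwa [mul_assoc]) ha
  rcases Ideal.subset_union.1 hcover with h | h
  · refine Or.inl (le_antisymm h fun r hr => mem_eltColon.2 ?_)
    rw [← mul_assoc]
    exact I.mul_mem_right a (mem_eltColon.1 hr)
  · exact Or.inr (le_antisymm h fun r hr => mem_eltColon.2 (hφ.1 I (mem_eltColon.1 hr)))
end

section
/- Let I be a proper ideal of R that is a φ-δ-S-primary ideal of R associated to s ∈ S. If I is not a δ-S-primary ideal of R associated to s, then I² ⊆ φ(I). -/
theorem sq_subset_phi_of_not_delta_S_primary
    {R : Type*} [CommRing R] [Nontrivial R]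
    (δ φ : Ideal R → Ideal R)
    (hδ : IsIdealExpansion δ) (hφ : IsIdealReduction φ)
    (S : Set R) (hS : IsMultSubset S) (s : R) (hs : s ∈ S)
    (I : Ideal R) (hI : IsPhiDeltaSPrimary φ δ S s I)
    (hnot : ¬ IsDeltaSPrimary δ S s I) :
    I ^ 2 ≤ φ I := by
  obtain ⟨hne, hdisj, hprim⟩ := hI
  have hbad : ∃ a b : R, a * b ∈ I ∧ s * a ∉ I ∧ s * b ∉ δ I := by
    by_contra! hcon
    exact hnot ⟨hne, hdisj, fun a b hab => or_iff_not_imp_left.mpr (hcon a b hab)⟩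
  obtain ⟨a, b, hab, hsa, hsb⟩ := hbad
  have key : ∀ x ∈ I, ∀ y ∈ I, (a + x) * (b + y) ∈ φ I := by
    intro x hx y hy
    by_contra hnmem
    have hmem : (a + x) * (b + y) ∈ I := by
      have h := I.add_mem (I.add_mem hab (I.mul_mem_left a hy)) (I.mul_mem_right (b + y) hx)
      convert h using 1
      ring
    rcases hprim _ _ hmem hnmem with h | h
    · rw [mul_add] at h
      exact hsa ((I.add_mem_iff_left (I.mul_mem_left s hx)).mp h)
    · rw [mul_add] at h
      exact hsb (((δ I).add_mem_iff_left ((δ I).mul_mem_left s (hδ.1 I hy))).mp h)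
  rw [pow_two, Ideal.mul_le]
  intro x hx y hy
  have h := (φ I).add_mem
    ((φ I).sub_mem ((φ I).sub_mem (key x hx y hy) (key x hx 0 I.zero_mem))
      (key 0 I.zero_mem y hy)) (key 0 I.zero_mem 0 I.zero_mem)
  convert h using 1
  ring
end

section
/- Let I be a proper ideal of R that is a φ-δ-S-primary ideal of R associated to s ∈ S. Then I ⊆ √(φ(I)), or sy ∈ δ(I) for every y ∈ √(φ(I)). -/
/-- If `a * b ∈ I` violated the `δ`-`S`-primary condition, so would every `(a + i) * (b + j)` with
`i, j ∈ I`, since `I ⊆ δ I`. All these products would then lie in `φ I`, and so would each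
`i * j`. -/
theorem IsPhiDeltaSPrimary.isDeltaSPrimary {R : Type*} [CommRing R]
    {δ φ : Ideal R → Ideal R} (hδ : IsIdealExpansion δ) {S : Set R} {s : R} {I : Ideal R}
    (hI : IsPhiDeltaSPrimary φ δ S s I) (hsq : ¬ I * I ≤ φ I) : IsDeltaSPrimary δ S s I := by
  refine ⟨hI.1, hI.2.1, fun a b hab => ?_⟩
  by_contra! hcon
  obtain ⟨ha, hb⟩ := hcon
  have key : ∀ i ∈ I, ∀ j ∈ I, (a + i) * (b + j) ∈ φ I := by
    intro i hi j hj
    by_contra hn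
    have hmem : (a + i) * (b + j) ∈ I := by
      have h : (a + i) * (b + j) = a * b + (a * j + (b + j) * i) := by ring
      rw [h]
      exact I.add_mem hab (I.add_mem (I.mul_mem_left _ hj) (I.mul_mem_left _ hi))
    rcases hI.2.2 _ _ hmem hn with h | h
    · rw [mul_add] at h
      exact ha ((I.add_mem_iff_left (I.mul_mem_left s hi)).1 h)
    · rw [mul_add] at h
      exact hb (((δ I).add_mem_iff_left ((δ I).mul_mem_left s (hδ.1 I hj))).1 h)
  refine hsq (Ideal.mul_le.2 fun i hi j hj => ?_)
  have h : i * j = (a + i) * (b + j) - (a + i) * (b + 0) - (a + 0) * (b + j)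
      + (a + 0) * (b + 0) := by ring
  rw [h]
  exact (φ I).add_mem ((φ I).sub_mem ((φ I).sub_mem (key i hi j hj) (key i hi 0 I.zero_mem))
    (key 0 I.zero_mem j hj)) (key 0 I.zero_mem 0 I.zero_mem)

theorem IsDeltaSPrimary.mul_mem_of_pow_mul_pow_mem {R : Type*} [CommRing R]
    {δ : Ideal R → Ideal R} {S : Set R} (hS : IsMultSubset S) {s : R} (hs : s ∈ S) {I : Ideal R}
    (hI : IsDeltaSPrimary δ S s I) {y : R} (n : ℕ) :
    ∀ m : ℕ, s ^ m * y ^ n ∈ I → s * y ∈ δ I := by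
  induction n with
  | zero =>
    intro m hm
    have hpow : s ^ m ∈ S :=
      Submonoid.pow_mem ⟨⟨S, fun {a b} ha hb => hS.2 a ha b hb⟩, hS.1⟩ hs m
    rw [pow_zero, mul_one] at hm
    have hmem : s ^ m ∈ (I : Set R) ∩ S := ⟨hm, hpow⟩
    rw [hI.2.1] at hmem
    exact hmem.elim
  | succ n ih =>
    intro m hm
    rw [pow_succ, ← mul_assoc] at hm
    rcases hI.2.2 _ _ hm with h | h
    · refine ih (m + 1) ?_
      rwa [pow_succ', mul_assoc]
    · exact h

theorem subset_radical_phi_or_smul_radical_phi_subset_delta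
    {R : Type*} [CommRing R] [Nontrivial R]
    (δ φ : Ideal R → Ideal R)
    (hδ : IsIdealExpansion δ) (hφ : IsIdealReduction φ)
    (S : Set R) (hS : IsMultSubset S) (s : R) (hs : s ∈ S)
    (I : Ideal R) (hI : IsPhiDeltaSPrimary φ δ S s I) :
    I ≤ (φ I).radical ∨ ∀ y ∈ (φ I).radical, s * y ∈ δ I := by
  by_cases hsq : I * I ≤ φ I
  · exact Or.inl fun x hx => ⟨2, by rw [pow_two]; exact hsq (Ideal.mul_mem_mul hx hx)⟩
  · refine Or.inr fun y hy => ?_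
    obtain ⟨n, hn⟩ := hy
    refine (hI.isDeltaSPrimary hδ hsq).mul_mem_of_pow_mul_pow_mem hS hs n 0 ?_
    rw [pow_zero, one_mul]
    exact hφ.1 I hn
end

section
/- Let I be a proper ideal of R with I ∩ S = ∅ and let s ∈ S. The following are equivalent: (1) I is a φ-δ-S-primary ideal of R associated to s; (2) for each a ∈ R with sa ∉ δ(I), either (I : a) ⊆ (I : s) or (I : a) = (φ(I) : a); (3) for all ideals A and B of R, if AB ⊆ I and AB ⊄ φ(I), then sA ⊆ I or sB ⊆ δ(I). -/
theorem phi_delta_S_primary_tfae_delta_version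
    {R : Type*} [CommRing R] [Nontrivial R]
    (δ φ : Ideal R → Ideal R)
    (hδ : IsIdealExpansion δ) (hφ : IsIdealReduction φ)
    (S : Set R) (hS : IsMultSubset S) (s : R) (hs : s ∈ S)
    (I : Ideal R) (hItop : I ≠ ⊤) (hIS : (I : Set R) ∩ S = ∅) :
    (IsPhiDeltaSPrimary φ δ S s I ↔
      ∀ a : R, s * a ∉ δ I →
        eltColon I a ≤ eltColon I s ∨ eltColon I a = eltColon (φ I) a) ∧
    (IsPhiDeltaSPrimary φ δ S s I ↔
      ∀ A B : Ideal R, A * B ≤ I → ¬ A * B ≤ φ I →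
        (∀ a ∈ A, s * a ∈ I) ∨ ∀ b ∈ B, s * b ∈ δ I) := by
  have h12 : IsPhiDeltaSPrimary φ δ S s I → ∀ a : R, s * a ∉ δ I →
      eltColon I a ≤ eltColon I s ∨ eltColon I a = eltColon (φ I) a := by
    rintro ⟨-, -, h⟩ a ha
    by_contra! hne
    obtain ⟨h1, h2⟩ := hne
    have h3 : ¬ eltColon I a ≤ eltColon (φ I) a := fun h3 =>
      h2 (le_antisymm h3 fun r hr => mem_eltColon.2 (hφ.1 I (mem_eltColon.1 hr)))
    obtain ⟨x, hx, hxs⟩ := SetLike.not_le_iff_exists.1 h1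
    obtain ⟨y, hy, hyφ⟩ := SetLike.not_le_iff_exists.1 h3
    have key : ∀ r ∈ eltColon I a, r ∉ eltColon (φ I) a → r ∈ eltColon I s := by
      intro r hr hrφ
      rw [mem_eltColon] at *
      rw [mul_comm r s]
      exact (h r a hr hrφ).resolve_right ha
    have hxφ : x ∈ eltColon (φ I) a := by_contra fun hc => hxs (key x hx hc)
    -- `x + y` lies outside `(φ I : a)`, hence in `(I : s)`, which forces `x` into `(I : s)` too
    have hxy : x + y ∈ eltColon I s := key _ (add_mem hx hy) fun hc =>
      hyφ ((Submodule.add_mem_iff_right _ hxφ).1 hc)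
    exact hxs ((Submodule.add_mem_iff_left _ (key y hy hyφ)).1 hxy)
  have h23 : (∀ a : R, s * a ∉ δ I →
      eltColon I a ≤ eltColon I s ∨ eltColon I a = eltColon (φ I) a) →
      ∀ A B : Ideal R, A * B ≤ I → ¬ A * B ≤ φ I →
        (∀ a ∈ A, s * a ∈ I) ∨ ∀ b ∈ B, s * b ∈ δ I := by
    intro h A B hAB hABφ
    by_contra! hne
    obtain ⟨⟨a₀, ha₀, hsa₀⟩, b₀, hb₀, hsb₀⟩ := hne
    have key : ∀ b ∈ B, s * b ∉ δ I → ∀ a ∈ A, a * b ∈ φ I := by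
      intro b hb hsb a ha
      have hA : ∀ a ∈ A, a ∈ eltColon I b := fun a ha =>
        mem_eltColon.2 (hAB (Ideal.mul_mem_mul ha hb))
      rcases h b hsb with h1 | h1
      · exact absurd (mem_eltColon.1 (h1 (hA a₀ ha₀))) (by rwa [mul_comm])
      · exact mem_eltColon.1 (h1 ▸ hA a ha)
    refine hABφ (Ideal.mul_le.2 fun a ha b hb => ?_)
    by_cases hsb : s * b ∈ δ I
    · have h1 : a * (b + b₀) ∈ φ I := key _ (add_mem hb hb₀)
        (fun hc => hsb₀ ((Submodule.add_mem_iff_right _ hsb).1 (by rwa [mul_add] at hc))) a ha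
      rw [mul_add] at h1
      exact (Submodule.add_mem_iff_left _ (key b₀ hb₀ hsb₀ a ha)).1 h1
    · exact key b hb hsb a ha
  have h31 : (∀ A B : Ideal R, A * B ≤ I → ¬ A * B ≤ φ I →
      (∀ a ∈ A, s * a ∈ I) ∨ ∀ b ∈ B, s * b ∈ δ I) → IsPhiDeltaSPrimary φ δ S s I := by
    refine fun h => ⟨hItop, hIS, fun a b hab habφ => ?_⟩
    have := h (Ideal.span {a}) (Ideal.span {b})
    simp only [Ideal.span_singleton_mul_span_singleton, Ideal.span_singleton_le_iff_mem] at this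
    exact (this hab habφ).imp (fun h => h a (Ideal.mem_span_singleton_self a))
      (fun h => h b (Ideal.mem_span_singleton_self b))
  exact ⟨⟨h12, fun h => h31 (h23 h)⟩, ⟨fun h => h23 (h12 h), h31⟩⟩
end

section
/- Let I be a proper ideal of R with I ∩ S = ∅ and let s ∈ S. The following are equivalent: (1) I is a φ-δ-S-primary ideal of R associated to s; (2) for each a ∈ R with sa ∉ I, either (I : a) ⊆ (δ(I) : s) or (I : a) = (φ(I) : a); (3) for all ideals A and B of R, if AB ⊆ I and AB ⊄ φ(I), then sA ⊆ I or sB ⊆ δ(I). -/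
theorem colon_dichotomy_of_primary {R : Type*} [CommRing R] {δ φ : Ideal R → Ideal R}
    (hφ : IsIdealReduction φ) {S : Set R} {s : R} {I : Ideal R}
    (h : IsPhiDeltaSPrimary φ δ S s I) (a : R) (ha : s * a ∉ I) :
    eltColon I a ≤ eltColon (δ I) s ∨ eltColon I a = eltColon (φ I) a := by
  have hcover : (eltColon I a : Set R) ⊆ eltColon (δ I) s ∪ eltColon (φ I) a := by
    intro b hb
    rw [SetLike.mem_coe, mem_eltColon] at hb
    simp only [Set.mem_union, SetLike.mem_coe, mem_eltColon]
    by_cases hab : b * a ∈ φ I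
    · exact Or.inr hab
    · rw [mul_comm b a] at hb hab
      rw [mul_comm b s]
      exact Or.inl ((h.2.2 a b hb hab).resolve_left ha)
  refine (Ideal.subset_union.mp hcover).imp_right fun hle => le_antisymm hle fun b hb => ?_
  rw [mem_eltColon] at hb ⊢
  exact hφ.1 I hb

theorem phi_delta_S_primary_tfae_ideal_version
    {R : Type*} [CommRing R] [Nontrivial R]
    (δ φ : Ideal R → Ideal R)
    (hδ : IsIdealExpansion δ) (hφ : IsIdealReduction φ)
    (S : Set R) (hS : IsMultSubset S) (s : R) (hs : s ∈ S)
    (I : Ideal R) (hItop : I ≠ ⊤) (hIS : (I : Set R) ∩ S = ∅) :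
    (IsPhiDeltaSPrimary φ δ S s I ↔
      ∀ a : R, s * a ∉ I →
        eltColon I a ≤ eltColon (δ I) s ∨ eltColon I a = eltColon (φ I) a) ∧
    (IsPhiDeltaSPrimary φ δ S s I ↔
      ∀ A B : Ideal R, A * B ≤ I → ¬ A * B ≤ φ I →
        (∀ a ∈ A, s * a ∈ I) ∨ ∀ b ∈ B, s * b ∈ δ I) := by
  refine ⟨⟨colon_dichotomy_of_primary hφ, fun h => ⟨hItop, hIS, fun a b hab hnab => ?_⟩⟩,
    ⟨fun h A B hAB hnAB => ?_, fun h => ⟨hItop, hIS, fun a b hab hnab => ?_⟩⟩⟩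
  · by_cases ha : s * a ∈ I
    · exact Or.inl ha
    right
    have hb : b ∈ eltColon I a := mem_eltColon.mpr (by rwa [mul_comm])
    rcases h a ha with hle | heq
    · rw [mul_comm]
      exact mem_eltColon.mp (hle hb)
    · rw [heq, mem_eltColon, mul_comm] at hb
      exact absurd hb hnab
  · by_contra! hcon
    obtain ⟨⟨a₀, ha₀, hsa₀⟩, b₀, hb₀, hsb₀⟩ := hcon
    have key : ∀ a ∈ A, s * a ∉ I → ∀ b ∈ B, a * b ∈ φ I := by
      intro a ha hsa b hb
      have hB : ∀ c ∈ B, c ∈ eltColon I a := fun c hc =>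
        mem_eltColon.mpr (mul_comm a c ▸ hAB (Ideal.mul_mem_mul ha hc))
      rcases colon_dichotomy_of_primary hφ h a hsa with hle | heq
      · have := mem_eltColon.mp (hle (hB b₀ hb₀))
        rw [mul_comm] at this
        exact absurd this hsb₀
      · have := hB b hb
        rwa [heq, mem_eltColon, mul_comm] at this
    refine hnAB (Ideal.mul_le.mpr fun a ha b hb => ?_)
    by_cases hsa : s * a ∈ I
    · have hsum : s * (a + a₀) ∉ I := by
        rwa [mul_add, Ideal.add_mem_iff_right I hsa]
      have := (φ I).sub_mem (key _ (A.add_mem ha ha₀) hsum b hb) (key a₀ ha₀ hsa₀ b hb)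
      rwa [← sub_mul, add_sub_cancel_right] at this
    · exact key a ha hsa b hb
  · have hmul : Ideal.span {a} * Ideal.span {b} = Ideal.span {a * b} :=
      Ideal.span_singleton_mul_span_singleton a b
    have hle : ∀ J : Ideal R, Ideal.span {a} * Ideal.span {b} ≤ J ↔ a * b ∈ J := fun J => by
      rw [hmul, Ideal.span_singleton_le_iff_mem]
    exact (h _ _ ((hle _).mpr hab) (mt (hle _).mp hnab)).imp
      (fun H => H a (Ideal.mem_span_singleton_self a))
      (fun H => H b (Ideal.mem_span_singleton_self b))
end

section
/- Let P be a φ-δ-S-primary ideal of R associated to s ∈ S, and let a ∈ R with a ∉ P. Suppose that (φ(P) : a) ⊆ φ((P : a)) and that S ∩ (P : a) = ∅. Then (P : a) is a φ-δ-S-primary ideal of R associated to s, i.e., whenever x, y ∈ R with xy ∈ (P : a) \ φ((P : a)), then sx ∈ (P : a) or sy ∈ δ((P : a)). -/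
theorem colon_phi_delta_S_primary
    {R : Type*} [CommRing R] [Nontrivial R]
    (δ φ : Ideal R → Ideal R)
    (hδ : IsIdealExpansion δ) (hφ : IsIdealReduction φ)
    (S : Set R) (hS : IsMultSubset S) (s : R) (hs : s ∈ S)
    (P : Ideal R) (hP : IsPhiDeltaSPrimary φ δ S s P)
    (a : R) (ha : a ∉ P)
    (hcolon : eltColon (φ P) a ≤ φ (eltColon P a))
    (hdisj : (eltColon P a : Set R) ∩ S = ∅) :
    IsPhiDeltaSPrimary φ δ S s (eltColon P a) := by
  have mem_colon : ∀ (I : Ideal R) (r : R), r ∈ eltColon I a ↔ r * a ∈ I := by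
    intro I r
    simp [eltColon]
  refine ⟨?_, hdisj, ?_⟩
  · intro h
    exact ha (by simpa using (mem_colon P 1).1 (h ▸ Submodule.mem_top))
  · intro x y hxy hxyφ
    have hmul : x * a * y = x * y * a := by ring
    -- Primariness of `P` applied to the factorisation `(x * a) * y` of `x * y * a`.
    rcases hP.2.2 (x * a) y (hmul ▸ (mem_colon P _).1 hxy)
      (fun h => hxyφ (hcolon ((mem_colon (φ P) _).2 (hmul ▸ h)))) with h | h
    · exact Or.inl ((mem_colon P _).2 (by rwa [mul_assoc]))
    · exact Or.inr (hδ.2 _ _ (fun r hr => (mem_colon P r).2 (P.mul_mem_right a hr)) h)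
end

section
/- Let S₁ ⊆ S₂ be multiplicative subsets of R with 1 ∈ S₁, such that for any s ∈ S₂ there exists t ∈ S₂ with st ∈ S₁. If I is a φ-δ-S₂-primary ideal of R associated to some s ∈ S₂, then there exists t ∈ S₂ with st ∈ S₁ such that I is a φ-δ-S₁-primary ideal of R associated to st ∈ S₁. -/
theorem phi_delta_S1_primary_of_S2
    {R : Type*} [CommRing R] [Nontrivial R]
    (δ φ : Ideal R → Ideal R)
    (hδ : IsIdealExpansion δ) (hφ : IsIdealReduction φ)
    (S₁ S₂ : Set R) (hS₁ : IsMultSubset S₁) (hS₂ : IsMultSubset S₂)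
    (hsub : S₁ ⊆ S₂)
    (hcond : ∀ s ∈ S₂, ∃ t ∈ S₂, s * t ∈ S₁)
    (I : Ideal R) (s : R) (hs : s ∈ S₂)
    (hI : IsPhiDeltaSPrimary φ δ S₂ s I) :
    ∃ t ∈ S₂, s * t ∈ S₁ ∧ IsPhiDeltaSPrimary φ δ S₁ (s * t) I := by
  obtain ⟨htop, hdisj, hprim⟩ := hI
  obtain ⟨t, ht, hst⟩ := hcond s hs
  refine ⟨t, ht, hst, htop, ?_, fun a b hab hφab => ?_⟩
  · exact Set.subset_empty_iff.mp (hdisj ▸ Set.inter_subset_inter_right _ hsub)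
  -- The ideals `I` and `δ I` absorb the extra factor `t`.
  · rw [mul_comm s t, mul_assoc, mul_assoc]
    exact (hprim a b hab hφab).imp (Ideal.mul_mem_left _ t) (Ideal.mul_mem_left _ t)
end

section
/- Let S* = {r ∈ R : r/1 is a unit in the localization S⁻¹R} be the saturation of S. Then a proper ideal I of R with I ∩ S = ∅ is a φ-δ-S-primary ideal of R associated to some s ∈ S if and only if I ∩ S* = ∅ and I is a φ-δ-S*-primary ideal of R associated to some s* ∈ S*. -/
theorem phi_delta_S_primary_iff_saturation
    {R : Type*} [CommRing R] [Nontrivial R]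
    (δ φ : Ideal R → Ideal R)
    (hδ : IsIdealExpansion δ) (hφ : IsIdealReduction φ)
    (S : Submonoid R)
    (I : Ideal R) (hItop : I ≠ ⊤) (hIS : (I : Set R) ∩ (S : Set R) = ∅) :
    (∃ s ∈ S, IsPhiDeltaSPrimary φ δ (S : Set R) s I) ↔
      ((I : Set R) ∩ {r : R | IsUnit (algebraMap R (Localization S) r)} = ∅ ∧
        ∃ t ∈ {r : R | IsUnit (algebraMap R (Localization S) r)},
          IsPhiDeltaSPrimary φ δ
            {r : R | IsUnit (algebraMap R (Localization S) r)} t I) := by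
  have hunit (r : R) : IsUnit (algebraMap R (Localization S) r) ↔ ∃ m ∈ S, r ∣ m :=
    IsLocalization.algebraMap_isUnit_iff S
  have hdisj : (I : Set R) ∩ {r : R | IsUnit (algebraMap R (Localization S) r)} = ∅ := by
    rw [Set.eq_empty_iff_forall_notMem] at hIS ⊢
    rintro r ⟨hrI, hr⟩
    obtain ⟨m, hm, hrm⟩ := (hunit r).1 hr
    exact hIS m ⟨I.mem_of_dvd hrm hrI, hm⟩
  constructor
  · rintro ⟨s, hs, -, -, h⟩
    exact ⟨hdisj, s, (hunit s).2 ⟨s, hs, dvd_rfl⟩, hItop, hdisj, h⟩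
  · rintro ⟨-, t, ht, -, -, h⟩
    obtain ⟨m, hm, htm⟩ := (hunit t).1 ht
    exact ⟨m, hm, hItop, hIS, fun a b hab hab' =>
      (h a b hab hab').imp (I.mem_of_dvd (mul_dvd_mul_right htm a))
        ((δ I).mem_of_dvd (mul_dvd_mul_right htm b))⟩
end

section
/- Let I be a proper ideal of R with I ∩ S = ∅ and δ(I) ∩ S = ∅, and let s ∈ S. Suppose φ(I) = (φ(I) : s), φ((I : s)) = (φ(I) : s), and δ((I : s)) = (δ(I) : s). If I is a φ-δ-S-primary ideal of R associated to s, then (I : s) is a φ-δ-primary ideal of R; that is, (I : s) is a proper ideal and whenever a, b ∈ R with ab ∈ (I : s) \ φ((I : s)), then a ∈ (I : s) or b ∈ δ((I : s)). -/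
theorem colon_s_phi_delta_primary
    {R : Type*} [CommRing R] [Nontrivial R]
    (δ φ : Ideal R → Ideal R)
    (hδ : IsIdealExpansion δ) (hφ : IsIdealReduction φ)
    (S : Set R) (hS : IsMultSubset S) (s : R) (hs : s ∈ S)
    (I : Ideal R) (hItop : I ≠ ⊤)
    (hIS : (I : Set R) ∩ S = ∅) (hδIS : ((δ I : Ideal R) : Set R) ∩ S = ∅)
    (hφs : φ I = eltColon (φ I) s)
    (hφcolon : φ (eltColon I s) = eltColon (φ I) s)
    (hδcolon : δ (eltColon I s) = eltColon (δ I) s)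
    (hI : IsPhiDeltaSPrimary φ δ S s I) :
    eltColon I s ≠ ⊤ ∧
      ∀ a b : R, a * b ∈ eltColon I s → a * b ∉ φ (eltColon I s) →
        a ∈ eltColon I s ∨ b ∈ δ (eltColon I s) := by
  have cancel : ∀ r : R, r * s ∈ φ I → r ∈ φ I := fun r hr => by
    rw [hφs]
    exact mem_eltColon.2 hr
  obtain ⟨-, -, hprim⟩ := hI
  refine ⟨fun htop => ?_, fun a b hab hnab => ?_⟩
  · have h1 : (1 : R) * s ∈ I := mem_eltColon.1 (htop ▸ Submodule.mem_top)
    rw [one_mul] at h1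
    exact (Set.eq_empty_iff_forall_notMem.1 hIS s) ⟨h1, hs⟩
  · rw [hφcolon, mem_eltColon] at hnab
    rw [mem_eltColon] at hab
    rw [hδcolon, mem_eltColon, mem_eltColon]
    have e : a * b * s = a * s * b := by ring
    rw [e] at hab hnab
    rcases hprim (a * s) b hab hnab with h | h
    · left
      have e2 : s * (a * s) = a * (s * s) := by ring
      rw [e2] at h
      by_cases hp : a * (s * s) ∈ φ I
      · rw [← mul_assoc] at hp
        exact hφ.1 I (cancel _ hp)
      · rcases hprim a (s * s) h hp with h' | h'
        · rwa [mul_comm]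
        · exact absurd ⟨h', hS.2 _ hs _ (hS.2 _ hs _ hs)⟩
            (Set.eq_empty_iff_forall_notMem.1 hδIS (s * (s * s)))
    · right
      rwa [mul_comm]
end

section
/- Let f : X → Y be a surjective ring homomorphism that is a (δ,φ)-(γ,ψ)-epimorphism. If J is a ψ-γ-f(S)-primary ideal of Y associated to f(s) for some s ∈ S, then f⁻¹(J) is a φ-δ-S-primary ideal of X associated to s. -/
theorem comap_phi_delta_S_primary
    {X Y : Type*} [CommRing X] [CommRing Y] [Nontrivial X] [Nontrivial Y]
    (δ φ : Ideal X → Ideal X) (γ ψ : Ideal Y → Ideal Y)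
    (hδ : IsIdealExpansion δ) (hφ : IsIdealReduction φ)
    (hγ : IsIdealExpansion γ) (hψ : IsIdealReduction ψ)
    (f : X →+* Y) (hf : Function.Surjective f)
    (hepi : ∀ J : Ideal Y,
      δ (J.comap f) = (γ J).comap f ∧ φ (J.comap f) = (ψ J).comap f)
    (S : Set X) (hS : IsMultSubset S) (s : X) (hs : s ∈ S)
    (J : Ideal Y) (hJ : IsPhiDeltaSPrimary ψ γ (f '' S) (f s) J) :
    IsPhiDeltaSPrimary φ δ S s (J.comap f) := by
  obtain ⟨hδJ, hφJ⟩ := hepi J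
  obtain ⟨hne, hdisj, hprim⟩ := hJ
  refine ⟨Ideal.comap_ne_top f hne, ?_, fun a b hab hnab => ?_⟩
  · refine Set.eq_empty_iff_forall_notMem.2 fun x hx => ?_
    exact Set.eq_empty_iff_forall_notMem.1 hdisj (f x) ⟨hx.1, x, hx.2, rfl⟩
  · rw [hφJ] at hnab
    rw [hδJ]
    simp only [Ideal.mem_comap, map_mul] at hab hnab ⊢
    exact hprim (f a) (f b) hab hnab
end

section
/- Let f : X → Y be a surjective ring homomorphism that is a (δ,φ)-(γ,ψ)-epimorphism. If I is a φ-δ-S-primary ideal of X associated to s ∈ S with ker(f) ⊆ I, then f(I) is a ψ-γ-f(S)-primary ideal of Y associated to f(s) ∈ f(S). -/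
theorem map_phi_delta_S_primary
    {X Y : Type*} [CommRing X] [CommRing Y] [Nontrivial X] [Nontrivial Y]
    (δ φ : Ideal X → Ideal X) (γ ψ : Ideal Y → Ideal Y)
    (hδ : IsIdealExpansion δ) (hφ : IsIdealReduction φ)
    (hγ : IsIdealExpansion γ) (hψ : IsIdealReduction ψ)
    (f : X →+* Y) (hf : Function.Surjective f)
    (hepi : ∀ J : Ideal Y,
      δ (J.comap f) = (γ J).comap f ∧ φ (J.comap f) = (ψ J).comap f)
    (S : Set X) (hS : IsMultSubset S) (s : X) (hs : s ∈ S)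
    (I : Ideal X) (hI : IsPhiDeltaSPrimary φ δ S s I)
    (hker : RingHom.ker f ≤ I) :
    IsPhiDeltaSPrimary ψ γ (f '' S) (f s) (I.map f) := by
  have hc : (I.map f).comap f = I := by
    rw [Ideal.comap_map_of_surjective' f hf, sup_eq_left.mpr hker]
  have hmem : ∀ x, f x ∈ I.map f ↔ x ∈ I := fun x => by
    rw [← Ideal.mem_comap, hc]
  obtain ⟨hδγ, hφψ⟩ := hepi (I.map f)
  rw [hc] at hδγ hφψ
  obtain ⟨hne, hdisj, hprim⟩ := hI
  refine ⟨?_, ?_, ?_⟩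
  · intro h
    rw [h, Ideal.comap_top] at hc
    exact hne hc.symm
  · rw [Set.eq_empty_iff_forall_notMem] at hdisj ⊢
    rintro _ ⟨hxI, x, hxS, rfl⟩
    exact hdisj x ⟨(hmem x).mp hxI, hxS⟩
  · intro a b hab hab'
    obtain ⟨a, rfl⟩ := hf a
    obtain ⟨b, rfl⟩ := hf b
    rw [← map_mul] at hab hab' ⊢
    rw [← map_mul, hmem, ← Ideal.mem_comap (K := γ _), ← hδγ]
    refine hprim a b ((hmem _).mp hab) ?_
    rwa [hφψ, Ideal.mem_comap]
end

section
/- Let I be a φ-δ-S-primary ideal of R associated to s ∈ S, and suppose there exist a, b ∈ R such that (a, b) is a φ-δ-S-twin zero of I. Then aI ⊆ φ(I), bI ⊆ φ(I), and √I = √(φ(I)). -/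
theorem twin_zero_mul_ideal_subset_phi
    {R : Type*} [CommRing R] [Nontrivial R]
    (δ φ : Ideal R → Ideal R)
    (hδ : IsIdealExpansion δ) (hφ : IsIdealReduction φ)
    (S : Set R) (hS : IsMultSubset S) (s : R) (hs : s ∈ S)
    (I : Ideal R) (hI : IsPhiDeltaSPrimary φ δ S s I)
    (a b : R)
    (htwin : a * b ∈ φ I ∧ s * a ∉ I ∧ s * b ∉ δ I) :
    (∀ x ∈ I, a * x ∈ φ I) ∧ (∀ x ∈ I, b * x ∈ φ I) ∧
      I.radical = (φ I).radical := by
  obtain ⟨hab, ha, hb⟩ := htwin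
  obtain ⟨-, -, hP⟩ := hI
  -- Perturbing a twin zero by elements of `I` keeps its product in `φ I`.
  have key : ∀ x ∈ I, ∀ y ∈ I, (a + x) * (b + y) ∈ φ I := by
    intro x hx y hy
    by_contra hn
    have hmem : (a + x) * (b + y) ∈ I := by
      have e : (a + x) * (b + y) = a * b + (a * y + (b + y) * x) := by ring
      rw [e]
      exact I.add_mem (hφ.1 I hab) (I.add_mem (I.mul_mem_left _ hy) (I.mul_mem_left _ hx))
    rcases hP _ _ hmem hn with h | h
    · rw [mul_add] at h
      exact ha ((I.add_mem_iff_left (I.mul_mem_left s hx)).1 h)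
    · rw [mul_add] at h
      exact hb (((δ I).add_mem_iff_left (hδ.1 I (I.mul_mem_left s hy))).1 h)
  have hA : ∀ x ∈ I, a * x ∈ φ I := by
    intro x hx
    have h := (φ I).sub_mem (key 0 I.zero_mem x hx) hab
    have e : (a + 0) * (b + x) - a * b = a * x := by ring
    rwa [e] at h
  have hB : ∀ x ∈ I, b * x ∈ φ I := by
    intro x hx
    have h := (φ I).sub_mem (key x hx 0 I.zero_mem) hab
    have e : (a + x) * (b + 0) - a * b = b * x := by ring
    rwa [e] at h
  refine ⟨hA, hB, le_antisymm ?_ (Ideal.radical_mono (hφ.1 I))⟩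
  rw [Ideal.radical_le_radical_iff]
  intro x hx
  refine ⟨2, ?_⟩
  have h := (φ I).sub_mem (key x hx x hx)
    ((φ I).add_mem hab ((φ I).add_mem (hA x hx) (hB x hx)))
  have e : (a + x) * (b + x) - (a * b + (a * x + b * x)) = x ^ 2 := by ring
  rwa [e] at h
end

section
/- Let I be a φ-δ-S-primary ideal of R associated to s ∈ S. Then I is a φ-δ-S-free twin zero if and only if for all ideals A and B of R with AB ⊆ I and AB ⊄ φ(I), either sA ⊆ I or sB ⊆ δ(I). -/
theorem free_twin_zero_iff
    {R : Type*} [CommRing R] [Nontrivial R]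
    (δ φ : Ideal R → Ideal R)
    (hδ : IsIdealExpansion δ) (hφ : IsIdealReduction φ)
    (S : Set R) (hS : IsMultSubset S) (s : R) (hs : s ∈ S)
    (I : Ideal R) (hI : IsPhiDeltaSPrimary φ δ S s I) :
    (∀ A B : Ideal R, A * B ≤ I → ¬ A * B ≤ φ I →
        ∀ a ∈ A, ∀ b ∈ B, ¬ (a * b ∈ φ I ∧ s * a ∉ I ∧ s * b ∉ δ I)) ↔
      (∀ A B : Ideal R, A * B ≤ I → ¬ A * B ≤ φ I →
        (∀ a ∈ A, s * a ∈ I) ∨ ∀ b ∈ B, s * b ∈ δ I) := by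
  constructor
  · intro h A B hAB hABφ
    by_contra! hc
    obtain ⟨⟨a, ha, hsa⟩, b, hb, hsb⟩ := hc
    -- Since `a * b ∈ A * B ⊆ I`, primaryness leaves only `a * b ∈ φ I`, making `(a, b)` a twin zero.
    by_cases hab : a * b ∈ φ I
    · exact h A B hAB hABφ a ha b hb ⟨hab, hsa, hsb⟩
    · exact (hI.2.2 a b (hAB (Ideal.mul_mem_mul ha hb)) hab).elim hsa hsb
  · rintro h A B hAB hABφ a ha b hb ⟨-, hsa, hsb⟩
    exact (h A B hAB hABφ).elim (fun hA => hsa (hA a ha)) (fun hB => hsb (hB b hb))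
end

section
/- Let R₁ and R₂ be commutative rings with 1 ≠ 0, R = R₁ × R₂, and S = S₁ × S₂ where Sᵢ is a multiplicative subset of Rᵢ with 1 ∈ Sᵢ. Let δᵢ be an expansion function and φᵢ a reduction function of ideals of Rᵢ for i = 1, 2, and let δ̂ and φ̂ be an expansion function and a reduction function of ideals of R satisfying δ̂(I₁ × I₂) = δ₁(I₁) × δ₂(I₂) and φ̂(I₁ × I₂) = φ₁(I₁) × φ₂(I₂) for all ideals I₁ of R₁ and I₂ of R₂. Assume φ₂(R₂) ≠ R₂. Let I₁ be a proper ideal of R₁ with I₁ ∩ S₁ = ∅, and let (s₁, s₂) ∈ S. Then I₁ × R₂ is a φ̂-δ̂-S-primary ideal of R associated to (s₁, s₂) if and only if I₁ is a δ₁-S₁-primary ideal of R₁ associated to s₁ and I₁ × R₂ is a δ̂-S-primary ideal of R associated to (s₁, s₂). -/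
theorem prod_with_top_phi_delta_S_primary_iff
    {R₁ R₂ : Type*} [CommRing R₁] [CommRing R₂] [Nontrivial R₁] [Nontrivial R₂]
    (δ₁ φ₁ : Ideal R₁ → Ideal R₁) (δ₂ φ₂ : Ideal R₂ → Ideal R₂)
    (hδ₁ : IsIdealExpansion δ₁) (hφ₁ : IsIdealReduction φ₁)
    (hδ₂ : IsIdealExpansion δ₂) (hφ₂ : IsIdealReduction φ₂)
    (δh φh : Ideal (R₁ × R₂) → Ideal (R₁ × R₂))
    (hδh : IsIdealExpansion δh) (hφh : IsIdealReduction φh)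
    (hδprod : ∀ (I₁ : Ideal R₁) (I₂ : Ideal R₂),
      δh (I₁.prod I₂) = (δ₁ I₁).prod (δ₂ I₂))
    (hφprod : ∀ (I₁ : Ideal R₁) (I₂ : Ideal R₂),
      φh (I₁.prod I₂) = (φ₁ I₁).prod (φ₂ I₂))
    (S₁ : Set R₁) (S₂ : Set R₂) (hS₁ : IsMultSubset S₁) (hS₂ : IsMultSubset S₂)
    (hφ₂top : φ₂ ⊤ ≠ ⊤)
    (I₁ : Ideal R₁) (hI₁ : I₁ ≠ ⊤) (hI₁S : (I₁ : Set R₁) ∩ S₁ = ∅)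
    (s₁ : R₁) (s₂ : R₂) (hs : (s₁, s₂) ∈ S₁ ×ˢ S₂) :
    IsPhiDeltaSPrimary φh δh (S₁ ×ˢ S₂) (s₁, s₂) (I₁.prod ⊤) ↔
      IsDeltaSPrimary δ₁ S₁ s₁ I₁ ∧
        IsDeltaSPrimary δh (S₁ ×ˢ S₂) (s₁, s₂) (I₁.prod ⊤) := by
  constructor
  · rintro ⟨hne, hdisj, h⟩
    have one_notMem : (1 : R₂) ∉ φ₂ ⊤ := fun h1 => hφ₂top ((Ideal.eq_top_iff_one _).2 h1)
    have hδ₂top : δ₂ ⊤ = ⊤ := top_le_iff.1 (hδ₂.1 ⊤)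
    have key : ∀ a b : R₁, a * b ∈ I₁ → s₁ * a ∈ I₁ ∨ s₁ * b ∈ δ₁ I₁ := by
      intro a b hab
      have hφ : ((a, 1) * (b, 1) : R₁ × R₂) ∉ φh (I₁.prod ⊤) := by
        rw [hφprod, Ideal.mem_prod]
        rintro ⟨-, h1⟩
        exact one_notMem (by simpa using h1)
      refine (h (a, 1) (b, 1) ⟨hab, trivial⟩ hφ).imp (fun h => h.1) fun h => ?_
      rw [hδprod] at h
      exact h.1
    refine ⟨⟨hI₁, hI₁S, key⟩, hne, hdisj, fun a b hab => ?_⟩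
    refine (key a.1 b.1 hab.1).imp (fun h => ⟨h, trivial⟩) fun h => ?_
    rw [hδprod, hδ₂top]
    exact ⟨h, trivial⟩
  · rintro ⟨-, hne, hdisj, h⟩
    exact ⟨hne, hdisj, fun a b hab _ => h a b hab⟩
end
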